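/- arXiv:1805.03357 — 2 statements merged into one kernel-verified Lean document; each statement's English description precedes it below -/
import Mathlib

section
/- There exists a constant c such that the following holds. Every linear hypergraph H = (V, E) on n vertices contains a subset V' ⊆ V with |V'| ≥ n/2 such that the induced subhypergraph H' on V' (whose hyperedges are the e ∈ E with e ⊆ V') is equitable; that is, either |V'| ≤ c, or for every vertex v ∈ V' and every integer i with 2 ≤ i ≤ log |V'|, the degree d_i(v, H') of v in hyperedges of size i of H' satisfies d_i(v, H') ≤ (i · u_i(H') / |V'|) · (log |V'|)^5, where u_i(H') is the number of hyperedges of H' of size i. -/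
/-!
The set `V'` is taken to maximise the potential
`Φ(W) = |W| - K * ∑ i ∈ [2, ⌊log n⌋], log (1 + u_i(W))`, with `K = 32 n / (log n)^5`.

* Since `u_i ≤ n ^ i`, the penalty subtracted from `|W|` is at most `64 n / (log n)^2 ≤ n / 2`
  once `log n ≥ 12`; comparing `V'` with the whole vertex set gives
  `|V'| ≥ Φ(V') ≥ Φ(V) ≥ n / 2`.
* Deleting a vertex `v` costs one unit of `|W|` and gains at least
  `K (log (1 + u_i) - log (1 + u_i - d_i(v))) ≥ K d_i(v) / (1 + u_i)`.
  Maximality of `V'` therefore forces `K d_i(v) ≤ 1 + u_i`, which is the required degree bound,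
  because `log |V'| ≥ (log n) / 2`.

Linearity of the hypergraph would only improve the bound on `u_i`; the crude bound `n ^ i`
is already enough.
-/

/-- The number `u_i` of hyperedges of size `i` of the subhypergraph induced on `W`. -/
def edgeCount {V : Type} [DecidableEq V] (E : Finset (Finset V)) (W : Finset V) (i : ℕ) : ℕ :=
  (E.filter (fun e => e ⊆ W ∧ e.card = i)).card

/-- The degree `d_i(v)` in the subhypergraph induced on `W`. -/
def edgeDeg {V : Type} [DecidableEq V] (E : Finset (Finset V)) (W : Finset V) (i : ℕ) (v : V) :
    ℕ :=
  (E.filter (fun e => e ⊆ W ∧ e.card = i ∧ v ∈ e)).card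

lemma edgeCount_erase {V : Type} [DecidableEq V] (E : Finset (Finset V)) (W : Finset V)
    (i : ℕ) (v : V) :
    edgeCount E (W.erase v) i + edgeDeg E W i v = edgeCount E W i := by
  unfold edgeCount edgeDeg
  rw [← Finset.card_filter_add_card_filter_not (s := E.filter (fun e => e ⊆ W ∧ e.card = i))
    (fun e => v ∈ e), add_comm, Finset.filter_filter, Finset.filter_filter]
  congr 2
  · ext e
    simp only [Finset.mem_filter]
    tauto
  · ext e
    simp only [Finset.mem_filter, Finset.subset_erase]
    tauto

lemma edgeCount_le {V : Type} [Fintype V] [DecidableEq V] (E : Finset (Finset V))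
    (W : Finset V) (i : ℕ) : edgeCount E W i ≤ Fintype.card V ^ i := by
  calc edgeCount E W i ≤ (Finset.powersetCard i (Finset.univ : Finset V)).card := by
        apply Finset.card_le_card
        intro e he
        simp only [Finset.mem_filter] at he
        simp [Finset.mem_powersetCard, he.2.2]
    _ = (Fintype.card V).choose i := by rw [Finset.card_powersetCard, Finset.card_univ]
    _ ≤ _ := Nat.choose_le_pow _ _

/-- The potential `|W| - K * ∑ i ∈ I, log (1 + u_i(W))`. -/
noncomputable def potential {V : Type} [DecidableEq V] (E : Finset (Finset V)) (K : ℝ)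
    (I : Finset ℕ) (W : Finset V) : ℝ :=
  (W.card : ℝ) - K * ∑ i ∈ I, Real.log (1 + (edgeCount E W i : ℝ))

/-- If deleting `v` does not increase the potential, then every degree of `v` is small. -/
lemma deg_le_of_potential {V : Type} [DecidableEq V] (E : Finset (Finset V)) {K : ℝ} (hK : 0 ≤ K)
    (I : Finset ℕ) (W : Finset V) {v : V} (hv : v ∈ W)
    (h : potential E K I (W.erase v) ≤ potential E K I W) {i : ℕ} (hi : i ∈ I) :
    K * (edgeDeg E W i v : ℝ) ≤ 1 + (edgeCount E W i : ℝ) := by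
  have hcount : ∀ j, (edgeCount E (W.erase v) j : ℝ) + edgeDeg E W j v = edgeCount E W j :=
    fun j => by exact_mod_cast edgeCount_erase E W j v
  have hcard : ((W.erase v).card : ℝ) + 1 = W.card := by
    exact_mod_cast Finset.card_erase_add_one hv
  -- Only the `i`-th term of the sum is used; the others are nonnegative.
  have hsum : Real.log (1 + (edgeCount E W i : ℝ)) - Real.log (1 + (edgeCount E (W.erase v) i : ℝ))
      ≤ ∑ j ∈ I, (Real.log (1 + (edgeCount E W j : ℝ))
        - Real.log (1 + (edgeCount E (W.erase v) j : ℝ))) := by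
    refine Finset.single_le_sum (f := fun j => Real.log (1 + (edgeCount E W j : ℝ))
        - Real.log (1 + (edgeCount E (W.erase v) j : ℝ))) (fun j _ => ?_) hi
    apply sub_nonneg.2
    apply Real.log_le_log (by positivity)
    have := hcount j
    have : (0 : ℝ) ≤ edgeDeg E W j v := Nat.cast_nonneg _
    linarith
  rw [Finset.sum_sub_distrib] at hsum
  have hpos : (0 : ℝ) < 1 + edgeCount E W i := by positivity
  have hpos' : (0 : ℝ) < 1 + edgeCount E (W.erase v) i := by positivity
  have hlog : (edgeDeg E W i v : ℝ) / (1 + edgeCount E W i) ≤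
      Real.log (1 + (edgeCount E W i : ℝ))
        - Real.log (1 + (edgeCount E (W.erase v) i : ℝ)) := by
    have h1 := Real.log_le_sub_one_of_pos (div_pos hpos' hpos)
    rw [Real.log_div hpos'.ne' hpos.ne'] at h1
    have h2 : (1 + (edgeCount E (W.erase v) i : ℝ)) / (1 + edgeCount E W i) - 1
        = -((edgeDeg E W i v : ℝ) / (1 + edgeCount E W i)) := by
      have := hcount i
      field_simp
      linarith
    linarith
  have h3 := mul_le_mul_of_nonneg_left (hlog.trans hsum) hK
  unfold potential at h
  have h4 : K * ((edgeDeg E W i v : ℝ) / (1 + edgeCount E W i)) ≤ 1 := by linarith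
  rwa [← mul_div_assoc, div_le_one hpos] at h4

/-- The total penalty `∑ log (1 + u_i)` is at most `2 (log n)^3`. -/
lemma sum_log_le {V : Type} [Fintype V] [DecidableEq V] (E : Finset (Finset V)) (W : Finset V)
    (hL : 12 ≤ Real.log (Fintype.card V : ℝ)) :
    ∑ i ∈ Finset.Icc 2 ⌊Real.log (Fintype.card V : ℝ)⌋₊, Real.log (1 + (edgeCount E W i : ℝ))
      ≤ 2 * Real.log (Fintype.card V : ℝ) ^ 3 := by
  set n := Fintype.card V
  set L := Real.log (n : ℝ)
  have hn : 2 ≤ n := by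
    by_contra hlt
    have h01 : n = 0 ∨ n = 1 := by omega
    have : L = 0 := by rcases h01 with h | h <;> simp [L, h]
    linarith
  have hterm : ∀ i ∈ Finset.Icc 2 ⌊L⌋₊, Real.log (1 + (edgeCount E W i : ℝ)) ≤ 2 * L ^ 2 := by
    intro i hi
    have hiL : (i : ℝ) ≤ L := (Nat.le_floor_iff (by linarith)).1 (Finset.mem_Icc.1 hi).2
    have h1 : 1 + edgeCount E W i ≤ n ^ (i + 1) := by
      have h2 := edgeCount_le E W i
      have h3 : 1 ≤ n ^ i := Nat.one_le_pow _ _ (by omega)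
      have h4 : n ^ i * 2 ≤ n ^ i * n := Nat.mul_le_mul_left _ hn
      rw [pow_succ]
      have h2' : edgeCount E W i ≤ n ^ i := h2
      omega
    calc Real.log (1 + (edgeCount E W i : ℝ)) ≤ Real.log ((n : ℝ) ^ (i + 1)) := by
          apply Real.log_le_log (by positivity)
          exact_mod_cast h1
      _ = (i + 1) * L := by rw [Real.log_pow]; push_cast; rfl
      _ ≤ 2 * L ^ 2 := by nlinarith
  calc _ ≤ (Finset.Icc 2 ⌊L⌋₊).card • (2 * L ^ 2) := Finset.sum_le_card_nsmul _ _ _ hterm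
    _ ≤ L * (2 * L ^ 2) := by
        rw [nsmul_eq_mul]
        apply mul_le_mul_of_nonneg_right _ (by positivity)
        refine le_trans ?_ (Nat.floor_le (by linarith : (0 : ℝ) ≤ L))
        rw [Nat.card_Icc]
        exact_mod_cast (by omega : ⌊L⌋₊ + 1 - 2 ≤ ⌊L⌋₊)
    _ = 2 * L ^ 3 := by ring

/-- Every linear hypergraph on `n` vertices contains an induced subhypergraph on at least
`n/2` vertices which is equitable. -/
theorem stmt_5 : ∃ c : ℕ, ∀ (V : Type) [Fintype V] [DecidableEq V]
    (E : Finset (Finset V)),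
    (∀ e ∈ E, 2 ≤ e.card) →
    (∀ e ∈ E, ∀ e' ∈ E, e ≠ e' → (e ∩ e').card ≤ 1) →
    ∃ V' : Finset V, Fintype.card V ≤ 2 * V'.card ∧
      (V'.card ≤ c ∨
        ∀ v ∈ V', ∀ i : ℕ, 2 ≤ i → (i : ℝ) ≤ Real.log (V'.card : ℝ) →
          ((E.filter (fun e => e ⊆ V' ∧ e.card = i ∧ v ∈ e)).card : ℝ) ≤
            ((i : ℝ) * ((E.filter (fun e => e ⊆ V' ∧ e.card = i)).card : ℝ) /
              (V'.card : ℝ)) * (Real.log (V'.card : ℝ)) ^ 5) := by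
  -- The threshold `exp 12` makes `log n ≥ 12`, so that `64 / (log n)^2 ≤ 1 / 2`.
  refine ⟨⌈Real.exp 12⌉₊, ?_⟩
  intro V _ _ E _ _
  by_cases hc : Fintype.card V ≤ ⌈Real.exp 12⌉₊
  · refine ⟨Finset.univ, ?_, Or.inl ?_⟩
    · rw [Finset.card_univ]; omega
    · rwa [Finset.card_univ]
  have hn : Real.exp 12 ≤ (Fintype.card V : ℝ) :=
    (Nat.le_ceil _).trans (by exact_mod_cast (not_le.1 hc).le)
  have hn0 : (0 : ℝ) < (Fintype.card V : ℝ) := (Real.exp_pos 12).trans_le hn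
  have hL : 12 ≤ Real.log (Fintype.card V : ℝ) := (Real.le_log_iff_exp_le hn0).2 hn
  have hpen := fun W => sum_log_le E W hL
  set n : ℝ := (Fintype.card V : ℝ) with hn_def
  set L := Real.log n with hL_def
  have hL0 : 0 < L := by linarith
  set K : ℝ := 32 * n / L ^ 5 with hK_def
  have hK : 0 < K := by positivity
  set I := Finset.Icc 2 ⌊L⌋₊
  obtain ⟨W, -, hW⟩ := Finset.exists_max_image (Finset.univ : Finset (Finset V))
    (potential E K I) ⟨∅, Finset.mem_univ _⟩
  have hpenK : K * (2 * L ^ 3) ≤ n / 2 := by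
    have : K * (2 * L ^ 3) = 64 * n / L ^ 2 := by
      rw [hK_def]; field_simp; ring
    rw [this, div_le_div_iff₀ (by positivity) (by norm_num)]
    nlinarith [mul_le_mul hL hL (by norm_num) hL0.le]
  have hhalf : n / 2 ≤ (W.card : ℝ) := by
    have h1 := hW Finset.univ (Finset.mem_univ _)
    unfold potential at h1
    rw [Finset.card_univ] at h1
    have h2 := mul_le_mul_of_nonneg_left (hpen Finset.univ) hK.le
    have h3 : 0 ≤ K * ∑ i ∈ I, Real.log (1 + (edgeCount E W i : ℝ)) := by
      refine mul_nonneg hK.le (Finset.sum_nonneg fun i _ => Real.log_nonneg ?_)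
      have : (0 : ℝ) ≤ edgeCount E W i := Nat.cast_nonneg _
      linarith
    linarith
  have hm0 : (0 : ℝ) < W.card := by linarith
  have hmn : (W.card : ℝ) ≤ n := Nat.cast_le.2 (Finset.card_le_univ W)
  refine ⟨W, ?_, Or.inr ?_⟩
  · have : n ≤ 2 * (W.card : ℝ) := by linarith
    rw [hn_def] at this
    exact_mod_cast this
  intro v hv i hi2 hil
  have hiI : i ∈ I := Finset.mem_Icc.2 ⟨hi2, Nat.le_floor (hil.trans (Real.log_le_log hm0 hmn))⟩
  have hdeg := deg_le_of_potential E hK.le I W hv (hW _ (Finset.mem_univ _)) hiI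
  have hsplit := edgeCount_erase E W i v
  change (edgeDeg E W i v : ℝ) ≤ (i : ℝ) * (edgeCount E W i : ℝ) / (W.card : ℝ) *
    Real.log (W.card : ℝ) ^ 5
  have hl : L / 2 ≤ Real.log (W.card : ℝ) := by
    have h1 := Real.log_le_log (by linarith) hhalf
    rw [Real.log_div hn0.ne' (by norm_num)] at h1
    have := Real.log_two_lt_d9
    linarith
  have hl5 : (L / 2) ^ 5 ≤ Real.log (W.card : ℝ) ^ 5 := pow_le_pow_left₀ (by positivity) hl 5
  rcases Nat.eq_zero_or_pos (edgeDeg E W i v) with h0 | h0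
  · rw [h0, Nat.cast_zero]
    have : 0 ≤ Real.log (W.card : ℝ) := by linarith
    positivity
  have hu1 : (1 : ℝ) ≤ edgeCount E W i := by
    exact_mod_cast (by omega : 1 ≤ edgeCount E W i)
  have hi2' : (2 : ℝ) ≤ i := by exact_mod_cast hi2
  calc (edgeDeg E W i v : ℝ) ≤ 2 * edgeCount E W i / K := by
        rw [le_div_iff₀ hK]; linarith
    _ = 2 * edgeCount E W i / n * (L / 2) ^ 5 := by
        rw [hK_def]; field_simp; ring
    _ ≤ (i : ℝ) * (edgeCount E W i : ℝ) / (W.card : ℝ) * Real.log (W.card : ℝ) ^ 5 := by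
        gcongr
end

section
/- For every integer d ≥ 2 there exists a constant c (depending only on d) such that the following holds. Every linear hypergraph H = (V, E) on n vertices in which every hyperedge has size at most d and each hyperedge e carries an integer threshold t_e with 1 ≤ t_e ≤ |e| − 1 contains a subset W ⊆ V with |W| ≥ n/2 such that the strict subhypergraph H_W induced by W is equitable; that is, either |W| ≤ c, or for every vertex v ∈ W and every integer i with 1 ≤ i ≤ d − 1, the number d_i(v, H_W) of hyperedges of H_W with threshold i containing v satisfies d_i(v, H_W) ≤ (i · u_i(H_W) / |W|) · (log |W|)^5, where u_i(H_W) is the number of hyperedges of H_W with threshold i. -/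
/-!
Write `Φ_i(W)` for the total excess `∑ (|e ∩ W| - t_e)⁺` over the hyperedges of threshold `i`.
Since only surviving hyperedges contribute, `Φ_i(W) ≤ d * u_i(H_W)`, and deleting a vertex `v` of
`W` lowers `Φ_i` by at least `d_i(v, H_W)` (`excess_erase_add_le`). Thus a vertex violating
equitability at `i` lowers `log (1 + Φ_i)` by more than `δ = log (n/2)^5 / (2dn)`
(`log_drop`), provided `|W| ≥ n/2`.

Let `W` minimise `∑_i log (1 + Φ_i(W)) - δ |W|` over all vertex sets. Comparison with the whole
vertex set gives `δ (n - |W|) ≤ d log (1 + d n²)`, because a linear hypergraph has at most `n²`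
hyperedges; for large `n` this forces `|W| ≥ n/2`. Comparison with `W \ {v}` shows that no vertex
violates equitability. For small `n` the whole vertex set has at most `c` elements.
-/

/-- The total excess over threshold, inside `W`, of the hyperedges of threshold `i`. The truncated
subtraction makes hyperedges outside the strict subhypergraph contribute `0`. -/
def excess {V : Type} [DecidableEq V] (E : Finset (Finset V)) (t : Finset V → ℕ) (i : ℕ)
    (W : Finset V) : ℕ :=
  ∑ e ∈ E with t e = i, ((e ∩ W).card - t e)

lemma excess_mono {V : Type} [DecidableEq V] (E : Finset (Finset V)) (t : Finset V → ℕ) (i : ℕ)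
    {W W' : Finset V} (h : W ⊆ W') : excess E t i W ≤ excess E t i W' :=
  Finset.sum_le_sum fun _ _ =>
    Nat.sub_le_sub_right (Finset.card_le_card (Finset.inter_subset_inter_left h)) _

lemma excess_erase_add_le {V : Type} [DecidableEq V] (E : Finset (Finset V)) (t : Finset V → ℕ)
    (i : ℕ) (W : Finset V) (v : V) :
    excess E t i (W.erase v) +
      (E.filter (fun e => t e < (e ∩ W).card ∧ t e = i ∧ v ∈ e ∩ W)).card ≤ excess E t i W := by
  have h : E.filter (fun e => t e < (e ∩ W).card ∧ t e = i ∧ v ∈ e ∩ W) =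
      (E.filter (fun e => t e = i)).filter (fun e => t e < (e ∩ W).card ∧ v ∈ e ∩ W) := by
    ext e; simp only [Finset.mem_filter]; tauto
  rw [h, Finset.card_filter, excess, excess, ← Finset.sum_add_distrib]
  refine Finset.sum_le_sum fun e _ => ?_
  split_ifs with hc
  · have : e ∩ W.erase v = (e ∩ W).erase v := Finset.inter_erase v e W
    rw [this, Finset.card_erase_of_mem hc.2]
    omega
  · exact Nat.sub_le_sub_right
      (Finset.card_le_card (Finset.inter_subset_inter_left (Finset.erase_subset v W))) _

lemma excess_le {V : Type} [DecidableEq V] (E : Finset (Finset V)) (t : Finset V → ℕ)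
    (i d : ℕ) (hE : ∀ e ∈ E, e.card ≤ d) (W : Finset V) :
    excess E t i W ≤ d * (E.filter (fun e => t e < (e ∩ W).card ∧ t e = i)).card := by
  have h : E.filter (fun e => t e < (e ∩ W).card ∧ t e = i) =
      (E.filter (fun e => t e = i)).filter (fun e => t e < (e ∩ W).card) := by
    ext e; simp only [Finset.mem_filter]; tauto
  rw [h, Finset.card_filter, excess, Finset.mul_sum]
  refine Finset.sum_le_sum fun e he => ?_
  have h1 := hE e (Finset.mem_filter.1 he).1
  have h2 : (e ∩ W).card ≤ e.card := Finset.card_le_card Finset.inter_subset_left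
  split_ifs <;> omega

/-- In a linear hypergraph a pair of distinct vertices determines the hyperedge containing it. -/
lemma card_edges_le {V : Type} [Fintype V] [DecidableEq V] (E : Finset (Finset V))
    (h2 : ∀ e ∈ E, 2 ≤ e.card)
    (hlin : ∀ e ∈ E, ∀ e' ∈ E, e ≠ e' → (e ∩ e').card ≤ 1) :
    E.card ≤ Fintype.card V ^ 2 := by
  have hp : ∀ e ∈ E, ∃ p : V × V, p.1 ∈ e ∧ p.2 ∈ e ∧ p.1 ≠ p.2 := fun e he => by
    obtain ⟨a, ha, b, hb, hab⟩ := Finset.one_lt_card.1 (h2 e he)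
    exact ⟨(a, b), ha, hb, hab⟩
  rcases E.eq_empty_or_nonempty with rfl | ⟨e₀, he₀⟩
  · simp
  haveI : Nonempty (V × V) := ⟨(hp e₀ he₀).choose⟩
  choose! f hf using hp
  have := Finset.card_le_card_of_injOn (s := E) (t := (Finset.univ : Finset (V × V))) f
    (fun _ _ => Finset.mem_univ _) (fun e he e' he' hee => by
      by_contra hne
      have h1 := hlin e he e' he' hne
      have h3 := hf e he
      have h4 := hf e' he'
      rw [← hee] at h4
      have : 1 < (e ∩ e').card := Finset.one_lt_card.2
        ⟨_, Finset.mem_inter.2 ⟨h3.1, h4.1⟩, _, Finset.mem_inter.2 ⟨h3.2.1, h4.2.1⟩, h3.2.2⟩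
      omega)
  simpa [sq] using this

/-- The logarithmic potential drops by more than `ℓ / (2dn)` when a vertex of degree `D` larger
than `(i u / m) L`, with `L ≥ ℓ`, is deleted; here `Φ ≤ d u` and `Φ'` are the excesses before and
after. -/
lemma log_drop {Φ Φ' D u d i m n L ℓ : ℝ} (hΦ' : 0 ≤ Φ') (hdrop : Φ' + D ≤ Φ) (hu : Φ ≤ d * u)
    (hdu : 1 ≤ d * u) (hu0 : 0 < u) (hi : 1 ≤ i) (hm : 0 < m) (hmn : m ≤ n) (hℓ : 0 ≤ ℓ)
    (hℓL : ℓ ≤ L) (hD : i * u / m * L < D) :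
    ℓ / (2 * d * n) < Real.log (1 + Φ) - Real.log (1 + Φ') := by
  have hd : 0 < d := pos_of_mul_pos_left (by linarith) hu0.le
  have hL : 0 ≤ L := hℓ.trans hℓL
  have hD0 : 0 < D := lt_of_le_of_lt (by positivity) hD
  have hΦ : 0 < 1 + Φ := by linarith
  have h1 : D / (1 + Φ) ≤ Real.log (1 + Φ) - Real.log (1 + Φ') := by
    rw [← Real.log_div (by linarith) (by linarith)]
    refine le_trans ?_ (Real.one_sub_inv_le_log_of_pos (by positivity))
    rw [inv_div, one_sub_div hΦ.ne']
    gcongr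
    linarith
  have h2 : D / (2 * d * u) ≤ D / (1 + Φ) := by
    gcongr
    linarith
  have h3 : ℓ / (2 * d * n) ≤ (i * u / m * L) / (2 * d * u) := by
    have : (i * u / m * L) / (2 * d * u) = i * L / (2 * d * m) := by
      field_simp
    rw [this]
    gcongr
    nlinarith
  have h4 : (i * u / m * L) / (2 * d * u) < D / (2 * d * u) := by
    gcongr
  linarith

lemma exists_large (d : ℕ) : ∃ N : ℕ, ∀ n : ℕ, N < n →
    4 ≤ n ∧ 0 < Real.log ((n : ℝ) / 2) ∧
      4 * (d : ℝ) ^ 2 * Real.log (1 + d * (n : ℝ) ^ 2) ≤ Real.log ((n : ℝ) / 2) ^ 5 := by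
  have ht : Filter.Tendsto (fun n : ℕ => Real.log ((n : ℝ) / 2)) Filter.atTop Filter.atTop :=
    Real.tendsto_log_atTop.comp
      (tendsto_natCast_atTop_atTop.atTop_div_const (by norm_num))
  obtain ⟨N, hN⟩ := Filter.eventually_atTop.1
    ((ht.eventually_ge_atTop (32 * (d : ℝ) ^ 2 + 1)).and (Filter.eventually_ge_atTop (d + 4)))
  refine ⟨N, fun n hn => ?_⟩
  obtain ⟨h1, h2⟩ := hN n hn.le
  set ℓ := Real.log ((n : ℝ) / 2) with hℓ
  have hn4 : (4 : ℝ) ≤ n := by exact_mod_cast (by omega : 4 ≤ n)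
  have hnd : (d : ℝ) + 4 ≤ n := by exact_mod_cast h2
  have hd0 : (0 : ℝ) ≤ d := d.cast_nonneg
  have hℓ1 : 1 ≤ ℓ := by nlinarith [sq_nonneg (d : ℝ)]
  refine ⟨by omega, by linarith, ?_⟩
  -- `1 + d n² ≤ n⁴ ≤ (n/2)⁸`, so the logarithm on the left is at most `8 ℓ`.
  have h3 : Real.log (1 + d * (n : ℝ) ^ 2) ≤ 8 * ℓ := by
    have e : 8 * ℓ = Real.log (((n : ℝ) / 2) ^ 8) := by rw [Real.log_pow]; norm_num [hℓ]
    rw [e]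
    apply Real.log_le_log (by positivity)
    have a1 : 1 + d * (n : ℝ) ^ 2 ≤ (n : ℝ) ^ 2 * (n : ℝ) ^ 2 := by
      nlinarith [mul_nonneg (sq_nonneg (n : ℝ)) (by nlinarith : (0 : ℝ) ≤ (n : ℝ) ^ 2 - d - 1)]
    have a2 : (n : ℝ) ^ 2 ≤ ((n : ℝ) / 2) ^ 4 := by
      have : (16 : ℝ) ≤ (n : ℝ) ^ 2 := by nlinarith
      nlinarith [mul_nonneg (sq_nonneg (n : ℝ)) (sub_nonneg.2 this)]
    calc _ ≤ (n : ℝ) ^ 2 * (n : ℝ) ^ 2 := a1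
      _ ≤ ((n : ℝ) / 2) ^ 4 * ((n : ℝ) / 2) ^ 4 := by gcongr
      _ = _ := by ring
  have h4 : ℓ ≤ ℓ ^ 4 := le_self_pow₀ hℓ1 (by norm_num)
  calc 4 * (d : ℝ) ^ 2 * Real.log (1 + d * (n : ℝ) ^ 2) ≤ 4 * (d : ℝ) ^ 2 * (8 * ℓ) := by gcongr
    _ = (32 * (d : ℝ) ^ 2) * ℓ := by ring
    _ ≤ ℓ ^ 4 * ℓ := by gcongr; linarith
    _ = ℓ ^ 5 := by ring

/-- Every linear hypergraph of dimension at most `d` with thresholds contains a subset `W`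
of at least half the vertices such that the strict subhypergraph induced by `W` is
equitable. -/
theorem stmt_16 : ∀ d : ℕ, 2 ≤ d → ∃ c : ℕ, ∀ (V : Type) [Fintype V] [DecidableEq V]
    (E : Finset (Finset V)) (t : Finset V → ℕ),
    (∀ e ∈ E, 2 ≤ e.card ∧ e.card ≤ d) →
    (∀ e ∈ E, ∀ e' ∈ E, e ≠ e' → (e ∩ e').card ≤ 1) →
    (∀ e ∈ E, 1 ≤ t e ∧ t e ≤ e.card - 1) →
    ∃ W : Finset V, Fintype.card V ≤ 2 * W.card ∧
      (W.card ≤ c ∨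
        ∀ v ∈ W, ∀ i : ℕ, 1 ≤ i → i ≤ d - 1 →
          ((E.filter (fun e => t e < (e ∩ W).card ∧ t e = i ∧ v ∈ e ∩ W)).card : ℝ) ≤
            ((i : ℝ) * ((E.filter (fun e => t e < (e ∩ W).card ∧ t e = i)).card : ℝ) /
              (W.card : ℝ)) * (Real.log (W.card : ℝ)) ^ 5) := by
  intro d hd
  obtain ⟨N, hN⟩ := exists_large d
  refine ⟨N, fun V _ _ E t hE hlin _ => ?_⟩
  rcases le_or_gt (Fintype.card V) N with hsmall | hlarge
  · exact ⟨Finset.univ, by rw [Finset.card_univ]; omega,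
      Or.inl (by rwa [Finset.card_univ])⟩
  obtain ⟨hn4, hℓ0, hbig⟩ := hN _ hlarge
  have hcard := card_edges_le E (fun e he => (hE e he).1) hlin
  set n := Fintype.card V with hn
  set ℓ := Real.log ((n : ℝ) / 2) with hℓ
  have hn0 : (0 : ℝ) < n := by exact_mod_cast (by omega : 0 < n)
  have hd0 : (0 : ℝ) < d := by exact_mod_cast (by omega : 0 < d)
  set δ : ℝ := ℓ ^ 5 / (2 * d * n) with hδ
  have hδ0 : 0 < δ := by positivity
  let F : Finset V → ℝ := fun W => ∑ i ∈ Finset.range d, Real.log (1 + (excess E t i W : ℝ))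
  have hF0 : ∀ W, 0 ≤ F W := fun W => Finset.sum_nonneg fun i _ =>
    Real.log_nonneg (by linarith [(excess E t i W).cast_nonneg (α := ℝ)])
  obtain ⟨W, -, hW⟩ := Finset.exists_min_image (Finset.univ : Finset (Finset V))
    (fun W => F W - δ * W.card) Finset.univ_nonempty
  have hFV : F Finset.univ ≤ d * Real.log (1 + d * (n : ℝ) ^ 2) := by
    have : ∀ i ∈ Finset.range d, Real.log (1 + (excess E t i Finset.univ : ℝ)) ≤
        Real.log (1 + d * (n : ℝ) ^ 2) := fun i _ => by
      have h1 := excess_le E t i d (fun e he => (hE e he).2) Finset.univ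
      have h2 : excess E t i Finset.univ ≤ d * n ^ 2 :=
        h1.trans (Nat.mul_le_mul_left d ((Finset.card_filter_le _ _).trans hcard))
      have h3 : (excess E t i Finset.univ : ℝ) ≤ d * (n : ℝ) ^ 2 := by exact_mod_cast h2
      exact Real.log_le_log (by positivity) (by linarith)
    simpa using Finset.sum_le_card_nsmul _ _ _ this
  have hhalf : (n : ℝ) ≤ 2 * W.card := by
    have h1 := hW Finset.univ (Finset.mem_univ _)
    rw [Finset.card_univ, ← hn] at h1
    have h2 : d * Real.log (1 + d * (n : ℝ) ^ 2) ≤ δ * (n / 2) := by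
      have : δ * (n / 2) = ℓ ^ 5 / (4 * d) := by rw [hδ]; field_simp; ring
      rw [this, le_div_iff₀ (by positivity)]
      linarith
    have h3 : δ * (n / 2) ≤ δ * W.card := by linarith [hF0 W]
    have := le_of_mul_le_mul_left h3 hδ0
    linarith
  refine ⟨W, by exact_mod_cast hhalf, Or.inr fun v hv i hi hid => ?_⟩
  by_contra! hviol
  have hm0 : (0 : ℝ) < W.card := by linarith
  have hmn : (W.card : ℝ) ≤ n := by exact_mod_cast Finset.card_le_univ W
  have hℓL : ℓ ≤ Real.log W.card := Real.log_le_log (by positivity) (by linarith)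
  have hdrop := excess_erase_add_le E t i W v
  have hle := excess_le E t i d (fun e he => (hE e he).2) W
  set D := (E.filter (fun e => t e < (e ∩ W).card ∧ t e = i ∧ v ∈ e ∩ W)).card
  set u := (E.filter (fun e => t e < (e ∩ W).card ∧ t e = i)).card
  have hD1 : 0 < D := by
    have hL : 0 ≤ Real.log (W.card : ℝ) := hℓ0.le.trans hℓL
    have hD : (0 : ℝ) < D := lt_of_le_of_lt (by positivity) hviol
    exact_mod_cast hD
  have hdu : 0 < d * u := by omega
  have hu0 : 0 < u := Nat.pos_of_mul_pos_left hdu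
  have key : δ < Real.log (1 + (excess E t i W : ℝ)) -
      Real.log (1 + (excess E t i (W.erase v) : ℝ)) :=
    log_drop (Nat.cast_nonneg _) (by exact_mod_cast hdrop) (by exact_mod_cast hle)
      (by exact_mod_cast hdu) (by exact_mod_cast hu0) (by exact_mod_cast hi) hm0 hmn
      (by positivity) (pow_le_pow_left₀ hℓ0.le hℓL 5) hviol
  have hsum : Real.log (1 + (excess E t i W : ℝ)) -
      Real.log (1 + (excess E t i (W.erase v) : ℝ)) ≤ F W - F (W.erase v) := by
    simp only [F]
    rw [← Finset.sum_sub_distrib]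
    refine Finset.single_le_sum (f := fun j => Real.log (1 + (excess E t j W : ℝ)) -
      Real.log (1 + (excess E t j (W.erase v) : ℝ))) (fun j _ => ?_)
      (Finset.mem_range.2 (by omega))
    have h1 : (excess E t j (W.erase v) : ℝ) ≤ excess E t j W := by
      exact_mod_cast excess_mono E t j (Finset.erase_subset v W)
    exact sub_nonneg.2 (Real.log_le_log (by positivity) (by linarith))
  have hmin := hW (W.erase v) (Finset.mem_univ _)
  have hcardW : ((W.erase v).card : ℝ) = W.card - 1 := by
    rw [Finset.card_erase_of_mem hv, Nat.cast_pred (Finset.card_pos.2 ⟨v, hv⟩)]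
  rw [hcardW] at hmin
  linarith
end
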